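/- For every λ > 0 and every ν with 0 < ν < 1, the Conway–Maxwell–Poisson distribution CMP(λ, ν) is not infinitely divisible. -/

import Mathlib

open MeasureTheory

/-- The Conway–Maxwell–Poisson distribution `CMP(λ, ν)`, viewed as a measure on `ℝ`
supported on the nonnegative integers: `P(X = k) = (1/Z(λ,ν)) · λ^k/(k!)^ν`. -/
noncomputable def cmpMeasure (lam nu : ℝ) : Measure ℝ :=
  Measure.sum fun k : ℕ =>
    ENNReal.ofReal ((lam ^ k / (k.factorial : ℝ) ^ nu) /
        ∑' j : ℕ, lam ^ j / (j.factorial : ℝ) ^ nu) • Measure.dirac (k : ℝ)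

/-- The `n`-fold convolution of a measure on `ℝ`: the pushforward of the `n`-fold
product measure under summation of coordinates. -/
noncomputable def nfoldConv (n : ℕ) (μ : Measure ℝ) : Measure ℝ :=
  Measure.map (fun x : Fin n → ℝ => ∑ i, x i) (Measure.pi fun _ : Fin n => μ)

/-- A measure `μ` on `ℝ` is infinitely divisible if for every positive integer `n`
there is a probability measure whose `n`-fold convolution equals `μ`. -/
def InfinitelyDivisible (μ : Measure ℝ) : Prop :=
  ∀ n : ℕ, 0 < n → ∃ ν : Measure ℝ, IsProbabilityMeasure ν ∧ nfoldConv n ν = μ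

/-!
Let `P` be the generating function of an infinitely divisible law on `ℕ` charging `0`. Its
convolution roots also live on `ℕ`, so `P = Qₙ ^ n` with each `Qₙ` having nonnegative coefficients.
Then `(P' / P) Qₙ = n Qₙ'` has nonnegative coefficients and `Qₙ → 1` coefficientwise, so `P' / P`
has nonnegative coefficients (Katti's criterion).

For `CMP(λ, ν)`, comparing coefficients of `X P' = X (P' / P) P` gives, with `(N)ₘ` the falling
factorial and `s m` the `m`-th coefficient of `X P' / P` divided by `λ ^ m`,
`∑_{m ≤ N} s m (N)ₘ ^ ν = N` for all `N`. If all `s m ≥ 0`, growth in `N` kills the terms with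
`m ν > 1`, and the terms with `m ν < 1` are `o(N)`, so some `d` has `d ν = 1` and `s d = 1`.
But `s 1 = 1` as well, and for `d ≠ 1` the two terms `N ^ ν` and `(N)_d ^ ν ≥ N + 1 - d` together
exceed `N` for large `N`.
-/

open Filter Topology Finset

section PowerSeries

open PowerSeries
open scoped PowerSeries.WithPiTopology

/-- The logarithmic derivative `P' / P` of a formal power series, meaningful when the constant
coefficient of `P` is nonzero (otherwise `P⁻¹` is the junk value `0`). -/
noncomputable def logDerivSeries {K : Type*} [Field K] (P : K⟦X⟧) : K⟦X⟧ :=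
  d⁄dX K P * P⁻¹

section Field

variable {K : Type*} [Field K] {P Q : K⟦X⟧}

theorem logDerivSeries_mul_self (hP : constantCoeff P ≠ 0) :
    logDerivSeries P * P = d⁄dX K P := by
  rw [logDerivSeries, mul_assoc, PowerSeries.inv_mul_cancel _ hP, mul_one]

theorem logDerivSeries_mul (hP : constantCoeff P ≠ 0) (hQ : constantCoeff Q ≠ 0) :
    logDerivSeries (P * Q) = logDerivSeries P + logDerivSeries Q := by
  have hPP := PowerSeries.mul_inv_cancel P hP
  have hQQ := PowerSeries.mul_inv_cancel Q hQ
  simp only [logDerivSeries, PowerSeries.mul_inv_rev, Derivation.leibniz, smul_eq_mul]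
  linear_combination d⁄dX K Q * Q⁻¹ * hPP + d⁄dX K P * P⁻¹ * hQQ

theorem logDerivSeries_pow (hP : constantCoeff P ≠ 0) (n : ℕ) :
    logDerivSeries (P ^ n) = n * logDerivSeries P := by
  induction n with
  | zero => simp [logDerivSeries]
  | succ n ih =>
    rw [pow_succ, logDerivSeries_mul (by simpa using pow_ne_zero n hP) hP, ih]
    push_cast
    ring

theorem logDerivSeries_pow_mul (hP : constantCoeff P ≠ 0) (n : ℕ) :
    logDerivSeries (P ^ n) * P = n * d⁄dX K P := by
  rw [logDerivSeries_pow hP, mul_assoc, logDerivSeries_mul_self hP]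

theorem coeff_logDerivSeries_mul_of_pow_eq (hP : constantCoeff P ≠ 0) {n : ℕ} (hn : n ≠ 0)
    (hQ : Q ^ n = P) (k : ℕ) :
    coeff k (logDerivSeries P * Q) = n * ((k + 1) * coeff (k + 1) Q) := by
  subst hQ
  have hQ0 : constantCoeff Q ≠ 0 := ne_zero_pow hn (by simpa using hP)
  rw [logDerivSeries_pow_mul hQ0, ← nsmul_eq_mul, map_nsmul, coeff_derivative, nsmul_eq_mul,
    mul_comm (coeff (k + 1) Q)]

theorem coeff_X_mul_derivative (P : K⟦X⟧) (n : ℕ) :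
    coeff n (X * d⁄dX K P) = n * coeff n P := by
  cases n with
  | zero => simp
  | succ n => rw [coeff_succ_X_mul, coeff_derivative, mul_comm]; push_cast; rfl

end Field

variable {P : ℝ⟦X⟧} {Q : ℕ → ℝ⟦X⟧}

theorem tendsto_constantCoeff_root (hP : constantCoeff P ≠ 0) (hQ : ∀ n, Q n ^ (n + 1) = P)
    (hQ0 : ∀ n, 0 ≤ constantCoeff (Q n)) :
    Tendsto (fun n => constantCoeff (Q n)) atTop (𝓝 1) := by
  have hroot : ∀ n, constantCoeff (Q n) = constantCoeff P ^ (1 / ((n : ℝ) + 1)) := fun n => by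
    rw [← hQ n, map_pow, one_div, ← Nat.cast_succ,
      Real.pow_rpow_inv_natCast (hQ0 n) n.succ_ne_zero]
  simpa [hroot] using
    (tendsto_const_nhds (x := constantCoeff P)).rpow tendsto_one_div_add_atTop_nhds_zero_nat
      (Or.inl hP)

/-- The `(n + 1)`-st root satisfies `(n + 1) (k + 1) qₖ₊₁ = ∑_{j ≤ k} r_{k - j} q_j`, where `r` are
the coefficients of `P' / P`, so each coefficient is `O(1 / n)` once the previous ones converge. -/
theorem tendsto_root_one (hP : constantCoeff P ≠ 0) (hQ : ∀ n, Q n ^ (n + 1) = P)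
    (hQ0 : ∀ n, 0 ≤ constantCoeff (Q n)) : Tendsto Q atTop (𝓝 1) := by
  rw [WithPiTopology.tendsto_iff_coeff_tendsto]
  intro k
  induction k using Nat.strong_induction_on with
  | _ k ih =>
    cases k with
    | zero => simpa using tendsto_constantCoeff_root hP hQ hQ0
    | succ k =>
      have hcoeff : ∀ n, coeff (k + 1) (Q n) =
          coeff k (logDerivSeries P * Q n) / (k + 1) * (1 / ((n : ℝ) + 1)) := fun n => by
        rw [coeff_logDerivSeries_mul_of_pow_eq hP n.succ_ne_zero (hQ n)]
        push_cast
        field_simp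
      have hlim : Tendsto (fun n => coeff k (logDerivSeries P * Q n)) atTop
          (𝓝 (coeff k (logDerivSeries P * 1))) := by
        simp only [coeff_mul]
        exact tendsto_finsetSum _ fun p hp =>
          (ih p.2 (Finset.Nat.antidiagonal.snd_lt hp)).const_mul _
      simpa [hcoeff, coeff_one] using
        (hlim.div_const ((k : ℝ) + 1)).mul tendsto_one_div_add_atTop_nhds_zero_nat

theorem coeff_logDerivSeries_nonneg_of_roots (hP : constantCoeff P ≠ 0)
    (hQ : ∀ n, Q n ^ (n + 1) = P) (hQ0 : ∀ n k, 0 ≤ coeff k (Q n)) (k : ℕ) :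
    0 ≤ coeff k (logDerivSeries P) := by
  have hQconst : ∀ n, 0 ≤ constantCoeff (Q n) := fun n => by simpa using hQ0 n 0
  have hlim : Tendsto (fun n => coeff k (logDerivSeries P * Q n)) atTop
      (𝓝 (coeff k (logDerivSeries P))) := by
    simpa [Function.comp_def] using ((WithPiTopology.continuous_coeff ℝ k).tendsto _).comp
      ((tendsto_root_one hP hQ hQconst).const_mul (logDerivSeries P))
  refine ge_of_tendsto' hlim fun n => ?_
  rw [coeff_logDerivSeries_mul_of_pow_eq hP n.succ_ne_zero (hQ n)]
  have := hQ0 n (k + 1)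
  positivity

end PowerSeries

section Convolution

variable {n : ℕ} {α : Measure ℝ} {p : ℝ → Prop}

theorem ae_pi_of_ae_nfoldConv (h : ∀ᵐ y ∂nfoldConv n α, p y) :
    ∀ᵐ x ∂Measure.pi fun _ : Fin n => α, p (∑ i, x i) :=
  ae_of_ae_map (by fun_prop) h

theorem ae_pi_forall [SigmaFinite α] (h : ∀ᵐ y ∂α, p y) :
    ∀ᵐ x ∂Measure.pi fun _ : Fin n => α, ∀ i, p (x i) :=
  ae_all_iff.mpr fun _ => Measure.tendsto_eval_ae_ae.eventually h

theorem ae_nonneg_of_ae_nonneg_nfoldConv [SigmaFinite α] (hn : n ≠ 0)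
    (h : ∀ᵐ y ∂nfoldConv n α, 0 ≤ y) : ∀ᵐ x ∂α, 0 ≤ x := by
  have : NeZero n := ⟨hn⟩
  have hbox : Measure.pi (fun _ : Fin n => α) (Set.univ.pi fun _ => Set.Iio 0) = 0 := by
    refine measure_mono_null (fun x hx => ?_) (ae_pi_of_ae_nfoldConv h)
    have hneg : ∀ i, x i < 0 := fun i => hx i trivial
    exact not_le.mpr (sum_neg (fun i _ => hneg i) univ_nonempty)
  rw [Measure.pi_pi, prod_const, card_univ, Fintype.card_fin] at hbox
  simpa only [ae_iff, not_le] using! eq_zero_of_pow_eq_zero hbox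

theorem nfoldConv_singleton_zero [SigmaFinite α] (h : ∀ᵐ x ∂α, 0 ≤ x) :
    nfoldConv n α {0} = α {0} ^ n := by
  have hpre : (fun x : Fin n → ℝ => ∑ i, x i) ⁻¹' {0} =ᵐ[Measure.pi fun _ => α]
      ({0} : Set (Fin n → ℝ)) := by
    filter_upwards [ae_pi_forall h] with x hx
    have hsum : ∑ i, x i = 0 ↔ x = 0 := by
      simp [sum_eq_zero_iff_of_nonneg fun i _ => hx i, funext_iff]
    exact propext hsum
  rw [nfoldConv, Measure.map_apply (by fun_prop) (measurableSet_singleton _),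
    measure_congr hpre, Measure.pi_singleton]
  simp

theorem ae_of_ae_nfoldConv [SigmaFinite α] (hn : n ≠ 0) (h0 : α {0} ≠ 0)
    (h : ∀ᵐ y ∂nfoldConv n α, p y) : ∀ᵐ x ∂α, p x := by
  obtain ⟨m, rfl⟩ := Nat.exists_eq_succ_of_ne_zero hn
  have hbox : Measure.pi (fun _ : Fin (m + 1) => α)
      (Set.univ.pi (Fin.cons {x | ¬p x} fun _ => {0})) = 0 := by
    refine measure_mono_null (fun x hx => ?_) (ae_pi_of_ae_nfoldConv h)
    have hhead : ¬p (x 0) := hx 0 trivial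
    have htail : ∀ i : Fin m, x i.succ = 0 := fun i => hx i.succ trivial
    simpa [Fin.sum_univ_succ, htail] using hhead
  rw [Measure.pi_pi, Fin.prod_univ_succ] at hbox
  simpa [h0, ae_iff] using hbox

theorem ae_mem_range_natCast_of_nfoldConv [SigmaFinite α] (hn : n ≠ 0)
    (h : ∀ᵐ y ∂nfoldConv n α, y ∈ Set.range ((↑) : ℕ → ℝ)) (h0 : nfoldConv n α {0} ≠ 0) :
    ∀ᵐ x ∂α, x ∈ Set.range ((↑) : ℕ → ℝ) := by
  have hnonneg : ∀ᵐ x ∂α, 0 ≤ x := ae_nonneg_of_ae_nonneg_nfoldConv hn <| by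
    filter_upwards [h] with _ ⟨k, hk⟩
    exact hk ▸ k.cast_nonneg
  rw [nfoldConv_singleton_zero hnonneg] at h0
  exact ae_of_ae_nfoldConv hn (ne_zero_pow hn h0) h

end Convolution

section GeneratingSeries

open PowerSeries

/-- The probability generating function `∑ₖ μ({k}) Xᵏ` of a measure on `ℝ`, as a formal power
series; it only sees the part of `μ` carried by `ℕ`. -/
noncomputable def probGenSeries (μ : Measure ℝ) : ℝ⟦X⟧ :=
  PowerSeries.mk fun k => μ.real {(k : ℝ)}

theorem coeff_probGenSeries (μ : Measure ℝ) (k : ℕ) :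
    coeff k (probGenSeries μ) = μ.real {(k : ℝ)} :=
  coeff_mk _ _

theorem sum_eq_natCast_iff_mem_image_finsuppAntidiag {ι : Type*} [Fintype ι] [DecidableEq ι]
    {x : ι → ℝ} (hx : ∀ i, x i ∈ Set.range ((↑) : ℕ → ℝ)) (k : ℕ) :
    ∑ i, x i = k ↔
      x ∈ (finsuppAntidiag univ k).image fun (f : ι →₀ ℕ) i => (f i : ℝ) := by
  choose g hg using hx
  obtain rfl : (fun i => (g i : ℝ)) = x := funext hg
  simp only [mem_image, mem_finsuppAntidiag]
  constructor
  · intro hsum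
    exact ⟨Finsupp.equivFunOnFinite.symm g, ⟨by exact_mod_cast hsum, by simp⟩, rfl⟩
  · rintro ⟨f, ⟨rfl, -⟩, hf⟩
    simp [← hf]

theorem probGenSeries_nfoldConv {α : Measure ℝ} [SigmaFinite α] (n : ℕ)
    (hα : ∀ᵐ x ∂α, x ∈ Set.range ((↑) : ℕ → ℝ)) :
    probGenSeries (nfoldConv n α) = probGenSeries α ^ n := by
  ext k
  have hpre : (fun x : Fin n → ℝ => ∑ i, x i) ⁻¹' {(k : ℝ)} =ᵐ[Measure.pi fun _ => α]
      (((finsuppAntidiag univ k).image fun (f : Fin n →₀ ℕ) i => (f i : ℝ) :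
        Finset (Fin n → ℝ)) : Set (Fin n → ℝ)) := by
    filter_upwards [ae_pi_forall hα] with x hx
    exact propext (sum_eq_natCast_iff_mem_image_finsuppAntidiag hx k)
  have hinj : Function.Injective fun (f : Fin n →₀ ℕ) i => (f i : ℝ) := fun f g hfg =>
    Finsupp.ext fun i => Nat.cast_injective (congrFun hfg i)
  have hprod : probGenSeries α ^ n = ∏ _i : Fin n, probGenSeries α := by simp
  rw [hprod, coeff_prod, coeff_probGenSeries, nfoldConv,
    map_measureReal_apply (by fun_prop) (measurableSet_singleton _), measureReal_congr hpre,
    ← sum_measureReal_singleton, sum_image hinj.injOn]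
  refine sum_congr rfl fun f _ => ?_
  simp only [measureReal_def, Measure.pi_singleton, ENNReal.toReal_prod, coeff_probGenSeries]

theorem InfinitelyDivisible.isProbabilityMeasure {μ : Measure ℝ} (hμ : InfinitelyDivisible μ) :
    IsProbabilityMeasure μ := by
  obtain ⟨α, _, rfl⟩ := hμ 1 one_pos
  exact Measure.isProbabilityMeasure_map (by fun_prop)

theorem InfinitelyDivisible.coeff_logDerivSeries_nonneg {μ : Measure ℝ}
    (hμ : InfinitelyDivisible μ) (hsupp : ∀ᵐ x ∂μ, x ∈ Set.range ((↑) : ℕ → ℝ))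
    (h0 : μ {0} ≠ 0) (k : ℕ) : 0 ≤ coeff k (logDerivSeries (probGenSeries μ)) := by
  have := hμ.isProbabilityMeasure
  choose α hα hconv using fun n : ℕ => hμ (n + 1) n.succ_pos
  refine coeff_logDerivSeries_nonneg_of_roots (Q := fun n => probGenSeries (α n)) ?_
    (fun n => ?_) (fun n j => ?_) k
  · rw [← coeff_zero_eq_constantCoeff_apply, coeff_probGenSeries, Nat.cast_zero]
    exact (measureReal_ne_zero_iff).mpr h0
  · have hα_supp : ∀ᵐ x ∂α n, x ∈ Set.range ((↑) : ℕ → ℝ) :=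
      ae_mem_range_natCast_of_nfoldConv n.succ_ne_zero (by rwa [hconv]) (by rwa [hconv])
    rw [← probGenSeries_nfoldConv _ hα_supp, hconv]
  · rw [coeff_probGenSeries]
    exact measureReal_nonneg

end GeneratingSeries

section DescFactorial

variable {s : ℕ → ℝ} {ν : ℝ} {m : ℕ}

theorem tendsto_descFactorial_div_pow_rpow (ν : ℝ) (m : ℕ) :
    Tendsto (fun N : ℕ => ((N.descFactorial m : ℝ) / (N : ℝ) ^ m) ^ ν) atTop (𝓝 1) := by
  have hne : ∀ᶠ N : ℕ in atTop, (N : ℝ) ^ m ≠ 0 :=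
    (eventually_ne_atTop 0).mono fun N hN => pow_ne_zero m (Nat.cast_ne_zero.mpr hN)
  simpa using ((Asymptotics.isEquivalent_iff_tendsto_one hne).mp
    (isEquivalent_descFactorial m)).rpow_const (Or.inl one_ne_zero)

theorem descFactorial_rpow_div_self_eventuallyEq (ν : ℝ) (m : ℕ) :
    (fun N : ℕ => (N.descFactorial m : ℝ) ^ ν / N) =ᶠ[atTop]
      fun N => ((N.descFactorial m : ℝ) / (N : ℝ) ^ m) ^ ν * (N : ℝ) ^ (m * ν - 1) := by
  filter_upwards [eventually_ne_atTop 0] with N hN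
  have hN' : (0 : ℝ) < N := by positivity
  rw [Real.div_rpow (by positivity) (by positivity), Real.rpow_sub_one hN'.ne',
    Real.rpow_mul hN'.le, Real.rpow_natCast]
  field_simp

theorem tendsto_descFactorial_rpow_div_self_atTop (hm : 1 < m * ν) :
    Tendsto (fun N : ℕ => (N.descFactorial m : ℝ) ^ ν / N) atTop atTop :=
  Tendsto.congr' (descFactorial_rpow_div_self_eventuallyEq ν m).symm <|
    (tendsto_descFactorial_div_pow_rpow ν m).pos_mul_atTop one_pos <|
      (tendsto_rpow_atTop (sub_pos.mpr hm)).comp tendsto_natCast_atTop_atTop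

theorem tendsto_descFactorial_rpow_div_self_of_le_one (hm : m * ν ≤ 1) :
    Tendsto (fun N : ℕ => (N.descFactorial m : ℝ) ^ ν / N) atTop
      (𝓝 (if m * ν = 1 then 1 else 0)) := by
  have hpow : Tendsto (fun N : ℕ => (N : ℝ) ^ (m * ν - 1)) atTop
      (𝓝 (if m * ν = 1 then 1 else 0)) := by
    split_ifs with h
    · simp [h]
    · simpa [Function.comp_def] using (tendsto_rpow_neg_atTop
        (sub_pos.mpr (lt_of_le_of_ne hm h))).comp tendsto_natCast_atTop_atTop
  simpa using ((tendsto_descFactorial_div_pow_rpow ν m).mul hpow).congr'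
    (descFactorial_rpow_div_self_eventuallyEq ν m).symm

theorem eq_zero_of_sum_descFactorial_rpow_eq (hs : ∀ m, 0 ≤ s m)
    (h : ∀ N : ℕ, ∑ m ∈ range (N + 1), s m * (N.descFactorial m : ℝ) ^ ν = N)
    (hm : 1 < m * ν) : s m = 0 := by
  by_contra hne
  have hpos : 0 < s m := lt_of_le_of_ne (hs m) (Ne.symm hne)
  obtain ⟨N, hlarge, hmN, hN⟩ :=
    (((tendsto_descFactorial_rpow_div_self_atTop hm).eventually_gt_atTop (1 / s m)).and
      ((eventually_ge_atTop m).and (eventually_gt_atTop 0))).exists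
  have hterm : s m * (N.descFactorial m : ℝ) ^ ν ≤ N := by
    rw [← h N]
    exact single_le_sum (f := fun m => s m * (N.descFactorial m : ℝ) ^ ν)
      (fun i _ => mul_nonneg (hs i) (by positivity)) (by simpa [Nat.lt_succ_iff] using hmN)
  rw [div_lt_div_iff₀ hpos (by exact_mod_cast hN)] at hlarge
  linarith

theorem exists_mul_eq_one_of_sum_descFactorial_rpow_eq (hν : 0 < ν) (hs : ∀ m, 0 ≤ s m)
    (h : ∀ N : ℕ, ∑ m ∈ range (N + 1), s m * (N.descFactorial m : ℝ) ^ ν = N) :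
    ∃ d : ℕ, d * ν = 1 ∧ s d = 1 := by
  obtain ⟨K, hK⟩ := exists_nat_gt (1 / ν)
  have hK_zero : ∀ m ≥ K, s m = 0 := fun m hm =>
    eq_zero_of_sum_descFactorial_rpow_eq hs h <|
      (div_lt_iff₀ hν).mp (hK.trans_le (Nat.cast_le.mpr hm))
  have hlim : Tendsto (fun N : ℕ => ∑ m ∈ range K, s m * ((N.descFactorial m : ℝ) ^ ν / N)) atTop
      (𝓝 (∑ m ∈ range K, s m * if m * ν = 1 then 1 else 0)) := by
    refine tendsto_finsetSum _ fun m _ => ?_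
    rcases le_or_gt (m * ν) 1 with hm | hm
    · exact (tendsto_descFactorial_rpow_div_self_of_le_one hm).const_mul _
    · simp [eq_zero_of_sum_descFactorial_rpow_eq hs h hm]
  have hone : ∀ᶠ N : ℕ in atTop, ∑ m ∈ range K, s m * ((N.descFactorial m : ℝ) ^ ν / N) = 1 := by
    filter_upwards [eventually_ge_atTop K, eventually_ne_atTop 0] with N hKN hN
    have htrunc : ∑ m ∈ range K, s m * (N.descFactorial m : ℝ) ^ ν = N := by
      rw [← h N]
      refine sum_subset (range_subset_range.mpr (by omega)) fun m _ hm => ?_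
      rw [hK_zero m (by simpa using hm), zero_mul]
    simp only [← mul_div_assoc, ← sum_div, htrunc]
    exact div_self (Nat.cast_ne_zero.mpr hN)
  have hsum : ∑ m ∈ range K, s m * (if m * ν = 1 then 1 else 0) = 1 :=
    tendsto_nhds_unique hlim (tendsto_const_nhds.congr' (hone.mono fun _ hN => hN.symm))
  obtain ⟨d, hdK, hd⟩ : ∃ d ∈ range K, d * ν = 1 := by
    by_contra! hno
    rw [sum_eq_zero fun m hm => by simp [hno m hm]] at hsum
    exact zero_ne_one hsum
  refine ⟨d, hd, ?_⟩
  rw [sum_eq_single_of_mem d hdK fun m _ hmd => ?_] at hsum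
  · simpa [hd] using hsum
  · have : m * ν ≠ 1 := fun hm =>
      hmd (Nat.cast_injective (mul_right_cancel₀ hν.ne' (hm.trans hd.symm)))
    simp [this]

theorem natCast_add_one_sub_le_descFactorial_rpow {d N : ℕ} (hν : 0 ≤ ν) (hd : d * ν = 1)
    (hdN : d ≤ N) : (N : ℝ) + 1 - d ≤ (N.descFactorial d : ℝ) ^ ν := by
  calc (N : ℝ) + 1 - d = ((N + 1 - d : ℕ) : ℝ) := by
        rw [Nat.cast_sub (by omega), Nat.cast_succ]
    _ = (((N + 1 - d) ^ d : ℕ) : ℝ) ^ ν := by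
        rw [Nat.cast_pow, ← Real.rpow_natCast_mul (Nat.cast_nonneg _), hd, Real.rpow_one]
    _ ≤ (N.descFactorial d : ℝ) ^ ν := by
        gcongr
        exact Nat.pow_sub_le_descFactorial N d

theorem not_forall_sum_descFactorial_rpow_eq (hν : 0 < ν) (hν1 : ν ≠ 1) (hs : ∀ m, 0 ≤ s m) :
    ¬∀ N : ℕ, ∑ m ∈ range (N + 1), s m * (N.descFactorial m : ℝ) ^ ν = N := by
  intro h
  obtain ⟨d, hd, hsd⟩ := exists_mul_eq_one_of_sum_descFactorial_rpow_eq hν hs h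
  have hs0 : s 0 = 0 := by simpa using h 0
  have hs1 : s 1 = 1 := by simpa [sum_range_succ, hs0] using h 1
  have hd1 : 1 ≠ d := by
    rintro rfl
    exact hν1 (by simpa using hd)
  obtain ⟨N, hlarge, hdN, hN⟩ :=
    ((((tendsto_rpow_atTop hν).comp tendsto_natCast_atTop_atTop).eventually_gt_atTop (d : ℝ)).and
      ((eventually_ge_atTop d).and (eventually_ge_atTop 1))).exists
  have hpair : (N : ℝ) ^ ν + (N.descFactorial d : ℝ) ^ ν ≤ N := by
    calc (N : ℝ) ^ ν + (N.descFactorial d : ℝ) ^ ν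
        = ∑ m ∈ {1, d}, s m * (N.descFactorial m : ℝ) ^ ν := by
          rw [sum_pair hd1, hs1, hsd, Nat.descFactorial_one, one_mul, one_mul]
      _ ≤ ∑ m ∈ range (N + 1), s m * (N.descFactorial m : ℝ) ^ ν := by
          refine sum_le_sum_of_subset_of_nonneg ?_ fun m _ _ => mul_nonneg (hs m) (by positivity)
          simp only [insert_subset_iff, singleton_subset_iff, mem_range]
          omega
      _ = N := h N
  have hlower := natCast_add_one_sub_le_descFactorial_rpow hν.le hd hdN
  have hlarge' : (d : ℝ) < (N : ℝ) ^ ν := hlarge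
  linarith

end DescFactorial

section ConwayMaxwellPoisson

open PowerSeries

variable {lam nu : ℝ}

/-- The unnormalised mass `λ^k / (k!)^ν` that `CMP(λ, ν)` gives to `k`. -/
noncomputable def cmpWeight (lam nu : ℝ) (k : ℕ) : ℝ :=
  lam ^ k / (k.factorial : ℝ) ^ nu

theorem cmpWeight_pos (hlam : 0 < lam) (nu : ℝ) (k : ℕ) : 0 < cmpWeight lam nu k := by
  have : (0 : ℝ) < k.factorial := mod_cast k.factorial_pos
  unfold cmpWeight
  positivity

theorem cmpWeight_succ (lam nu : ℝ) (k : ℕ) :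
    cmpWeight lam nu (k + 1) = lam / ((k : ℝ) + 1) ^ nu * cmpWeight lam nu k := by
  rw [cmpWeight, cmpWeight, Nat.factorial_succ, Nat.cast_mul, Nat.cast_succ,
    Real.mul_rpow (by positivity) (by positivity), pow_succ, div_mul_div_comm, mul_comm lam]

theorem summable_cmpWeight (hlam : 0 < lam) (hnu : 0 < nu) : Summable (cmpWeight lam nu) := by
  refine summable_of_ratio_test_tendsto_lt_one zero_lt_one
    (Eventually.of_forall fun k => (cmpWeight_pos hlam nu k).ne') ?_
  have hratio : ∀ k : ℕ, ‖cmpWeight lam nu (k + 1)‖ / ‖cmpWeight lam nu k‖ =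
      lam / ((k : ℝ) + 1) ^ nu := fun k => by
    rw [Real.norm_of_nonneg (cmpWeight_pos hlam nu _).le,
      Real.norm_of_nonneg (cmpWeight_pos hlam nu _).le, cmpWeight_succ,
      mul_div_cancel_right₀ _ (cmpWeight_pos hlam nu k).ne']
  simp only [hratio]
  exact ((tendsto_rpow_atTop hnu).comp
    (tendsto_atTop_add_const_right _ 1 tendsto_natCast_atTop_atTop)).const_div_atTop lam

theorem tsum_cmpWeight_pos (hlam : 0 < lam) (hnu : 0 < nu) : 0 < ∑' k, cmpWeight lam nu k :=
  (summable_cmpWeight hlam hnu).tsum_pos (fun k => (cmpWeight_pos hlam nu k).le) 0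
    (cmpWeight_pos hlam nu 0)

theorem cmpWeight_sub (hlam : lam ≠ 0) {m N : ℕ} (hm : m ≤ N) :
    cmpWeight lam nu (N - m) =
      cmpWeight lam nu N * ((N.descFactorial m : ℝ) ^ nu / lam ^ m) := by
  have hdesc : (0 : ℝ) < N.descFactorial m := mod_cast Nat.descFactorial_pos.mpr hm
  have hdesc_rpow : (N.descFactorial m : ℝ) ^ nu ≠ 0 := (Real.rpow_pos_of_pos hdesc nu).ne'
  rw [cmpWeight, cmpWeight, ← Nat.factorial_mul_descFactorial hm, Nat.cast_mul,
    Real.mul_rpow (by positivity) hdesc.le, pow_sub₀ _ hlam hm]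
  field_simp

theorem cmpMeasure_singleton (lam nu : ℝ) (k : ℕ) :
    cmpMeasure lam nu {(k : ℝ)} =
      ENNReal.ofReal (cmpWeight lam nu k / ∑' j, cmpWeight lam nu j) := by
  rw [cmpMeasure, Measure.sum_apply _ (measurableSet_singleton _), tsum_eq_single k]
  · simp [cmpWeight]
  · intro j hj
    simp [hj]

theorem ae_cmpMeasure_mem_range_natCast (lam nu : ℝ) :
    ∀ᵐ x ∂cmpMeasure lam nu, x ∈ Set.range ((↑) : ℕ → ℝ) := by
  rw [cmpMeasure, Measure.ae_sum_iff]
  exact fun k => Measure.ae_smul_measure (by simp [ae_dirac_eq]) _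

theorem cmpMeasure_singleton_zero_ne_zero (hlam : 0 < lam) (hnu : 0 < nu) :
    cmpMeasure lam nu {0} ≠ 0 := by
  rw [← Nat.cast_zero, cmpMeasure_singleton]
  exact (ENNReal.ofReal_pos.mpr
    (div_pos (cmpWeight_pos hlam nu 0) (tsum_cmpWeight_pos hlam hnu))).ne'

theorem coeff_probGenSeries_cmpMeasure (hlam : 0 < lam) (hnu : 0 < nu) (k : ℕ) :
    coeff k (probGenSeries (cmpMeasure lam nu)) =
      cmpWeight lam nu k / ∑' j, cmpWeight lam nu j := by
  rw [coeff_probGenSeries, measureReal_def, cmpMeasure_singleton, ENNReal.toReal_ofReal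
    (div_pos (cmpWeight_pos hlam nu k) (tsum_cmpWeight_pos hlam hnu)).le]

theorem sum_coeff_logDerivSeries_cmpMeasure (hlam : 0 < lam) (hnu : 0 < nu) (N : ℕ) :
    ∑ m ∈ range (N + 1),
      coeff m (X * logDerivSeries (probGenSeries (cmpMeasure lam nu))) / lam ^ m *
        (N.descFactorial m : ℝ) ^ nu = N := by
  set P := probGenSeries (cmpMeasure lam nu) with hP
  have hcoeff := coeff_probGenSeries_cmpMeasure hlam hnu
  have hpos : ∀ k, 0 < coeff k P := fun k => by
    rw [hP, hcoeff]
    exact div_pos (cmpWeight_pos hlam nu k) (tsum_cmpWeight_pos hlam hnu)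
  have hconst : constantCoeff P ≠ 0 := by simpa using (hpos 0).ne'
  have hsub : ∀ m ≤ N, coeff (N - m) P =
      coeff N P * ((N.descFactorial m : ℝ) ^ nu / lam ^ m) := fun m hm => by
    rw [hP, hcoeff, hcoeff, cmpWeight_sub hlam.ne' hm, mul_div_right_comm]
  apply mul_right_cancel₀ (hpos N).ne'
  calc (∑ m ∈ range (N + 1), coeff m (X * logDerivSeries P) / lam ^ m *
          (N.descFactorial m : ℝ) ^ nu) * coeff N P
      = ∑ m ∈ range (N + 1), coeff m (X * logDerivSeries P) * coeff (N - m) P := by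
        rw [sum_mul]
        refine sum_congr rfl fun m hm => ?_
        rw [hsub m (Nat.lt_succ_iff.mp (mem_range.mp hm))]
        ring
    _ = coeff N (X * logDerivSeries P * P) := by
        rw [coeff_mul, Nat.sum_antidiagonal_eq_sum_range_succ_mk]
    _ = N * coeff N P := by
        rw [mul_assoc, logDerivSeries_mul_self hconst, coeff_X_mul_derivative]

end ConwayMaxwellPoisson

theorem cmp_not_infinitelyDivisible_of_lt_one_general (lam nu : ℝ)
    (hlam : 0 < lam) (hnu : 0 < nu) (hnu1 : nu ≠ 1) :
    ¬ InfinitelyDivisible (cmpMeasure lam nu) := by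
  intro hID
  have hkatti := hID.coeff_logDerivSeries_nonneg (ae_cmpMeasure_mem_range_natCast lam nu)
    (cmpMeasure_singleton_zero_ne_zero hlam hnu)
  refine not_forall_sum_descFactorial_rpow_eq hnu hnu1 (fun m => div_nonneg ?_ (by positivity))
    (sum_coeff_logDerivSeries_cmpMeasure hlam hnu)
  cases m with
  | zero => rw [PowerSeries.coeff_zero_X_mul]
  | succ m => rw [PowerSeries.coeff_succ_X_mul]; exact hkatti m

/-- For every `λ > 0` and every `ν` with `0 < ν < 1`, the Conway–Maxwell–Poisson
distribution `CMP(λ, ν)` is not infinitely divisible. -/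
theorem cmp_not_infinitelyDivisible_of_lt_one (lam nu : ℝ)
    (hlam : 0 < lam) (hnu : 0 < nu) (hnu1 : nu < 1) :
    ¬ InfinitelyDivisible (cmpMeasure lam nu) :=
  cmp_not_infinitelyDivisible_of_lt_one_general lam nu hlam hnu hnu1.ne
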